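/- Let n ≥ 2, k ≥ 1, and let I^{(1)} ⊇ m^k ⊇ I^{(2)} be homogeneous m-primary ideals of R contained in m. Then the forgetful ℂ-linear map T^{=−1}(I^{(1)}, m^k, I^{(2)}) → T^{=−1}(I^{(1)}, I^{(2)}), (φ_1, φ_k, φ_2) ↦ (φ_1, φ_2), is surjective and admits a ℂ-linear section, and its kernel is ℂ-linearly isomorphic to Hom_ℂ(R_k/(I^{(2)} ∩ R_k), I^{(1)} ∩ R_{k−1}); in particular the kernel has dimension dim_ℂ(R_k/(I^{(2)} ∩ R_k)) · dim_ℂ(I^{(1)} ∩ R_{k−1}). -/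

import Mathlib

open MvPolynomial

noncomputable section
set_option synthInstance.maxHeartbeats 1000000
set_option maxHeartbeats 1000000

/-- `R n = ℂ[x_1, …, x_n]`. -/
abbrev R (n : ℕ) : Type := MvPolynomial (Fin n) ℂ

/-- `m = (x_1, …, x_n)`, the ideal generated by the variables. -/
def mId (n : ℕ) : Ideal (R n) := Ideal.span (Set.range MvPolynomial.X)

/-- `R_d`, the ℂ-subspace of homogeneous polynomials of degree `d`. -/
def Rdeg (n d : ℕ) : Submodule ℂ (R n) := homogeneousSubmodule (Fin n) ℂ d

open Classical in
/-- The canonical projection `R/p → R/q` (for `p ≤ q`); defined as `0` if `p ≰ q`. -/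
def proj {n : ℕ} (p q : Ideal (R n)) : (R n ⧸ p) →ₗ[R n] (R n ⧸ q) :=
  if h : p ≤ q then Submodule.mapQ p q LinearMap.id (fun _ hx => h hx) else 0

/-- Candidate tangent tuples for a pair of ideals. -/
abbrev TanCar2 (n : ℕ) (I1 I2 : Ideal (R n)) : Type :=
  (↥I1 →ₗ[R n] (R n ⧸ I1)) × (↥I2 →ₗ[R n] (R n ⧸ I2))

/-- Candidate tangent tuples for a triple of ideals. -/
abbrev TanCar3 (n : ℕ) (I1 K I2 : Ideal (R n)) : Type :=
  (↥I1 →ₗ[R n] (R n ⧸ I1)) × (↥K →ₗ[R n] (R n ⧸ K)) × (↥I2 →ₗ[R n] (R n ⧸ I2))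

/-- The tangent space `T(I^{(1)}, I^{(2)})` of a pair. -/
def pairT {n : ℕ} (I1 I2 : Ideal (R n)) : Submodule ℂ (TanCar2 n I1 I2) where
  carrier := { φ | ∀ (f : R n) (hf1 : f ∈ I1) (hf2 : f ∈ I2),
      φ.1 ⟨f, hf1⟩ = proj I2 I1 (φ.2 ⟨f, hf2⟩) }
  add_mem' := by
    intro a b ha hb f hf1 hf2
    simp only [Prod.fst_add, Prod.snd_add, LinearMap.add_apply, map_add,
      ha f hf1 hf2, hb f hf1 hf2]
  zero_mem' := by intro f hf1 hf2; simp
  smul_mem' := by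
    intro c a ha f hf1 hf2
    simp only [Prod.smul_fst, Prod.smul_snd, LinearMap.smul_apply,
      LinearMap.map_smul_of_tower, ha f hf1 hf2]

/-- The tangent space `T(I^{(1)}, K, I^{(2)})` of a triple. -/
def tripleT {n : ℕ} (I1 K I2 : Ideal (R n)) : Submodule ℂ (TanCar3 n I1 K I2) where
  carrier := { φ |
      (∀ (f : R n) (hf1 : f ∈ I1) (hfK : f ∈ K),
        φ.1 ⟨f, hf1⟩ = proj K I1 (φ.2.1 ⟨f, hfK⟩)) ∧
      (∀ (f : R n) (hfK : f ∈ K) (hf2 : f ∈ I2),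
        φ.2.1 ⟨f, hfK⟩ = proj I2 K (φ.2.2 ⟨f, hf2⟩)) }
  add_mem' := by
    intro a b ha hb
    refine ⟨fun f hf1 hfK => ?_, fun f hfK hf2 => ?_⟩
    · simp only [Prod.fst_add, Prod.snd_add, LinearMap.add_apply, map_add,
        ha.1 f hf1 hfK, hb.1 f hf1 hfK]
    · simp only [Prod.fst_add, Prod.snd_add, LinearMap.add_apply, map_add,
        ha.2 f hfK hf2, hb.2 f hfK hf2]
  zero_mem' := by
    refine ⟨fun f hf1 hfK => ?_, fun f hfK hf2 => ?_⟩ <;> simp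
  smul_mem' := by
    intro c a ha
    refine ⟨fun f hf1 hfK => ?_, fun f hfK hf2 => ?_⟩
    · simp only [Prod.smul_fst, Prod.smul_snd, LinearMap.smul_apply,
        LinearMap.map_smul_of_tower, ha.1 f hf1 hfK]
    · simp only [Prod.smul_fst, Prod.smul_snd, LinearMap.smul_apply,
        LinearMap.map_smul_of_tower, ha.2 f hfK hf2]

open Classical in
/-- The image of `R_{e+d}` in `R/I` (interpreted as `0` when `e + d < 0`). -/
def gradedImage {n : ℕ} (I : Ideal (R n)) (e : ℕ) (d : ℤ) : Submodule ℂ (R n ⧸ I) :=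
  if h : 0 ≤ (e : ℤ) + d then
    Submodule.map (Ideal.Quotient.mkₐ ℂ I).toLinearMap (Rdeg n ((e : ℤ) + d).toNat)
  else ⊥

/-- The property that a tangent vector `φ ∈ Hom_R(I, R/I)` is homogeneous of degree `d`:
for every `e ≥ 0` and every homogeneous `f ∈ I ∩ R_e`, `φ(f)` lies in the image of
`R_{e+d}` in `R/I`. -/
def gradedHom {n : ℕ} (I : Ideal (R n)) (d : ℤ) (φ : ↥I →ₗ[R n] (R n ⧸ I)) : Prop :=
  ∀ (e : ℕ) (f : R n) (hf : f ∈ I), f ∈ Rdeg n e → φ ⟨f, hf⟩ ∈ gradedImage I e d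

/-- The degree-`d` part `T^{=d}(I^{(1)}, I^{(2)})` of the tangent space of a pair of
homogeneous ideals. -/
def pairTgr {n : ℕ} (I1 I2 : Ideal (R n)) (d : ℤ) : Submodule ℂ (TanCar2 n I1 I2) :=
  pairT I1 I2 ⊓
    { carrier := { φ | gradedHom I1 d φ.1 ∧ gradedHom I2 d φ.2 }
      add_mem' := by
        intro a b ha hb
        refine ⟨fun e f hf hfe => ?_, fun e f hf hfe => ?_⟩
        · exact Submodule.add_mem _ (ha.1 e f hf hfe) (hb.1 e f hf hfe)
        · exact Submodule.add_mem _ (ha.2 e f hf hfe) (hb.2 e f hf hfe)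
      zero_mem' := by
        refine ⟨fun e f hf hfe => ?_, fun e f hf hfe => ?_⟩ <;>
          exact Submodule.zero_mem _
      smul_mem' := by
        intro c a ha
        refine ⟨fun e f hf hfe => ?_, fun e f hf hfe => ?_⟩
        · exact Submodule.smul_mem _ c (ha.1 e f hf hfe)
        · exact Submodule.smul_mem _ c (ha.2 e f hf hfe) }

/-- The degree-`d` part `T^{=d}(I^{(1)}, K, I^{(2)})` of the tangent space of a triple of
homogeneous ideals. -/
def tripleTgr {n : ℕ} (I1 K I2 : Ideal (R n)) (d : ℤ) : Submodule ℂ (TanCar3 n I1 K I2) :=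
  tripleT I1 K I2 ⊓
    { carrier := { φ | gradedHom I1 d φ.1 ∧ gradedHom K d φ.2.1 ∧ gradedHom I2 d φ.2.2 }
      add_mem' := by
        intro a b ha hb
        refine ⟨fun e f hf hfe => ?_, fun e f hf hfe => ?_, fun e f hf hfe => ?_⟩
        · exact Submodule.add_mem _ (ha.1 e f hf hfe) (hb.1 e f hf hfe)
        · exact Submodule.add_mem _ (ha.2.1 e f hf hfe) (hb.2.1 e f hf hfe)
        · exact Submodule.add_mem _ (ha.2.2 e f hf hfe) (hb.2.2 e f hf hfe)
      zero_mem' := by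
        refine ⟨fun e f hf hfe => ?_, fun e f hf hfe => ?_, fun e f hf hfe => ?_⟩ <;>
          exact Submodule.zero_mem _
      smul_mem' := by
        intro c a ha
        refine ⟨fun e f hf hfe => ?_, fun e f hf hfe => ?_, fun e f hf hfe => ?_⟩
        · exact Submodule.smul_mem _ c (ha.1 e f hf hfe)
        · exact Submodule.smul_mem _ c (ha.2.1 e f hf hfe)
        · exact Submodule.smul_mem _ c (ha.2.2 e f hf hfe) }

/-!
A homomorphism `φ : I → R/I` of degree `-1` sends `I ∩ R_e` into the image of `R_{e-1}`, which
vanishes modulo `m^(k+1)` when `e > k + 1`. Hence on `I ∩ m^(k+1)`, and modulo `m^(k+1)`, such a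
`φ` only depends on the degree `k + 1` component of its argument. In particular the degree `-1`
homomorphisms `m^(k+1) → R/m^(k+1)` are exactly the maps `f ↦ [ψ f_{k+1}]` for a `ℂ`-linear
`ψ : R_{k+1} → R_k`, and `(φ₁, ψ, φ₂)` is compatible if and only if `ψ` lifts `φ₁` on `R_{k+1}`
and lifts `φ₂` on `I₂ ∩ R_{k+1}`. This is a lifting problem of vector spaces: it is always
solvable, and two solutions differ by a map `R_{k+1} → I₁ ∩ R_k` vanishing on `I₂ ∩ R_{k+1}`.
-/

section LinearAlgebra

/-- Stated over `AddCommMonoid` because instance search does not find the additive inverses behind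
the `AddCommMonoid` structures of nested submodules and of `pairTgr`. -/
theorem projective_of_divisionRing (K V : Type*) [DivisionRing K] [AddCommMonoid V] [Module K V] :
    Module.Projective K V :=
  letI := Module.addCommMonoidToAddCommGroup K (M := V)
  inferInstance

theorem exists_lift_of_forall_mem_map {A V M N : Type*} [Semiring A] [AddCommMonoid V]
    [AddCommMonoid M] [AddCommMonoid N] [Module A V] [Module A M] [Module A N]
    [Module.Projective A V] (q : M →ₗ[A] N) (L : Submodule A M) (b : V →ₗ[A] N)
    (hb : ∀ v, b v ∈ L.map q) : ∃ c : V →ₗ[A] L, ∀ v, q (c v) = b v := by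
  obtain ⟨c, hc⟩ := Module.projective_lifting_property (q.submoduleMap L)
    (b.codRestrict (L.map q) hb) (q.submoduleMap_surjective L)
  exact ⟨c, fun v => congrArg Subtype.val (LinearMap.congr_fun hc v)⟩

theorem exists_extend_sub_mem {K V U : Type*} [DivisionRing K] [AddCommGroup V] [AddCommGroup U]
    [Module K V] [Module K U] (c : V →ₗ[K] U) {W : Submodule K V} (a : W →ₗ[K] U)
    (L : Submodule K U) (h : ∀ w : W, a w - c w ∈ L) :
    ∃ ψ : V →ₗ[K] U, (∀ w : W, ψ w = a w) ∧ ∀ v, ψ v - c v ∈ L := by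
  obtain ⟨g, hg⟩ := LinearMap.exists_extend ((a - c ∘ₗ W.subtype).codRestrict L h)
  have hgW : ∀ w : W, (g w : U) = a w - c w :=
    fun w => congrArg Subtype.val (LinearMap.congr_fun hg w)
  refine ⟨c + L.subtype ∘ₗ g, fun w => ?_, fun v => ?_⟩
  · rw [LinearMap.add_apply, LinearMap.comp_apply, Submodule.subtype_apply, hgW,
      add_sub_cancel]
  · rw [LinearMap.add_apply, add_sub_cancel_left]
    exact (g v).2

end LinearAlgebra

section HomogeneousComponents

variable {σ A : Type*}

theorem mem_pow_idealOfVars_of_isHomogeneous [CommSemiring A] {d k : ℕ} (h : k ≤ d)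
    {p : MvPolynomial σ A} (hp : p.IsHomogeneous d) : p ∈ idealOfVars σ A ^ k := by
  rw [mem_pow_idealOfVars_iff']
  intro x hx
  exact hp.coeff_eq_zero (hx.trans_le h).ne

theorem homogeneousComponent_mem_pow_idealOfVars [CommSemiring A] {k : ℕ} {p : MvPolynomial σ A}
    (hp : p ∈ idealOfVars σ A ^ k) (d : ℕ) :
    homogeneousComponent d p ∈ idealOfVars σ A ^ k := by
  rw [mem_pow_idealOfVars_iff'] at hp ⊢
  intro x hx
  rw [coeff_homogeneousComponent, hp x hx, ite_self]

theorem homogeneousComponent_eq_zero_of_mem_pow_idealOfVars [CommSemiring A] {d k : ℕ}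
    (h : d < k) {p : MvPolynomial σ A} (hp : p ∈ idealOfVars σ A ^ k) :
    homogeneousComponent d p = 0 := by
  ext x
  rw [coeff_homogeneousComponent, coeff_zero]
  split_ifs with hx
  · exact (mem_pow_idealOfVars_iff' k p).1 hp x (hx.trans_lt h)
  · rfl

theorem mul_sub_constantCoeff_smul_mem_pow_succ [CommRing A] {k : ℕ} (r : MvPolynomial σ A)
    {p : MvPolynomial σ A} (hp : p ∈ idealOfVars σ A ^ k) :
    r * p - constantCoeff r • p ∈ idealOfVars σ A ^ (k + 1) := by
  have hr : r - C (constantCoeff r) ∈ idealOfVars σ A := by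
    rw [← pow_one (idealOfVars σ A), mem_pow_idealOfVars_iff']
    intro x hx
    obtain rfl : x = 0 := (Finsupp.degree_eq_zero_iff x).1 (Nat.lt_one_iff.1 hx)
    simp [constantCoeff_eq]
  rw [smul_eq_C_mul, ← sub_mul, pow_succ']
  exact Ideal.mul_mem_mul hr hp

theorem homogeneousComponent_mul_of_mem_pow_idealOfVars [CommRing A] {k : ℕ}
    (r : MvPolynomial σ A) {p : MvPolynomial σ A} (hp : p ∈ idealOfVars σ A ^ k) :
    homogeneousComponent k (r * p) = constantCoeff r • homogeneousComponent k p := by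
  rw [← map_smul, ← sub_eq_zero, ← map_sub]
  exact homogeneousComponent_eq_zero_of_mem_pow_idealOfVars k.lt_succ_self
    (mul_sub_constantCoeff_smul_mem_pow_succ r hp)

end HomogeneousComponents

section Forgetful

variable {n : ℕ} {p q I K I1 I2 : Ideal (R n)}

theorem proj_mk (h : p ≤ q) (f : R n) :
    proj p q (Ideal.Quotient.mk p f) = Ideal.Quotient.mk q f := by
  rw [proj, dif_pos h]
  rfl

theorem proj_self (x : R n ⧸ p) : proj p p x = x := by
  obtain ⟨f, rfl⟩ := Ideal.Quotient.mk_surjective x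
  exact proj_mk le_rfl f

theorem proj_proj (h1 : K ≤ I1) (h2 : I2 ≤ K) (x : R n ⧸ I2) :
    proj K I1 (proj I2 K x) = proj I2 I1 x := by
  obtain ⟨f, rfl⟩ := Ideal.Quotient.mk_surjective x
  rw [proj_mk h2, proj_mk h1, proj_mk (h2.trans h1)]

theorem forget_mem_pairTgr (h1 : K ≤ I1) (h2 : I2 ≤ K) {d : ℤ} {φ : TanCar3 n I1 K I2}
    (hφ : φ ∈ tripleTgr I1 K I2 d) : (φ.1, φ.2.2) ∈ pairTgr I1 I2 d := by
  obtain ⟨⟨h1K, hK2⟩, hd1, -, hd2⟩ := hφ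
  refine ⟨fun f hf1 hf2 => ?_, hd1, hd2⟩
  rw [h1K f hf1 (h2 hf2), hK2 f (h2 hf2) hf2, proj_proj h1 h2]

/-- The forgetful map `T^{=d}(I₁, K, I₂) → T^{=d}(I₁, I₂)`, `(φ₁, φ_K, φ₂) ↦ (φ₁, φ₂)`. -/
def forgetful (h1 : K ≤ I1) (h2 : I2 ≤ K) (d : ℤ) :
    ↥(tripleTgr I1 K I2 d) →ₗ[ℂ] ↥(pairTgr I1 I2 d) where
  toFun φ := ⟨(φ.1.1, φ.1.2.2), forget_mem_pairTgr h1 h2 φ.2⟩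
  map_add' _ _ := rfl
  map_smul' _ _ := rfl

end Forgetful

section DegreeNegOne

variable {n k : ℕ} {I J I1 I2 : Ideal (R n)}

theorem gradedImage_succ_neg_one (I : Ideal (R n)) (k : ℕ) :
    gradedImage I (k + 1) (-1) =
      (Rdeg n k).map (Ideal.Quotient.mkₐ ℂ I).toLinearMap := by
  have h : ((k + 1 : ℕ) : ℤ) + -1 = k := by push_cast; ring
  rw [gradedImage, dif_pos (h ▸ k.cast_nonneg), h, Int.toNat_natCast]

theorem Rdeg_mem_mId_pow {d : ℕ} (h : k ≤ d) (f : Rdeg n d) : (f : R n) ∈ mId n ^ k :=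
  mem_pow_idealOfVars_of_isHomogeneous h f.2

theorem Rdeg_eq_zero_of_mem_mId_pow {d : ℕ} (h : d < k) {f : Rdeg n d}
    (hf : (f : R n) ∈ mId n ^ k) : f = 0 := by
  have hd : homogeneousComponent d (f : R n) = f := homogeneousComponent_eq_self f.2
  exact Subtype.ext (hd.symm.trans (homogeneousComponent_eq_zero_of_mem_pow_idealOfVars h hf))

theorem gradedHom.proj_apply_eq_zero {φ : ↥I →ₗ[R n] R n ⧸ I} (hφ : gradedHom I (-1) φ)
    (hIJ : I ≤ J) (hJ : mId n ^ k ≤ J) {e : ℕ} (he : k < e) {f : R n} (hf : f ∈ I)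
    (hfe : f ∈ Rdeg n e) : proj I J (φ ⟨f, hf⟩) = 0 := by
  obtain ⟨d, rfl⟩ : ∃ d, e = d + 1 := Nat.exists_eq_add_one.2 (k.zero_le.trans_lt he)
  have hmem := hφ (d + 1) f hf hfe
  rw [gradedImage_succ_neg_one] at hmem
  obtain ⟨g, hg, hgf⟩ := hmem
  rw [← hgf]
  exact (proj_mk hIJ g).trans
    (Ideal.Quotient.eq_zero_iff_mem.2 (hJ (Rdeg_mem_mId_pow (Nat.lt_succ_iff.1 he) ⟨g, hg⟩)))

theorem gradedHom.proj_apply_eq_homogeneousComponent {φ : ↥I →ₗ[R n] R n ⧸ I}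
    (hφ : gradedHom I (-1) φ) (hIJ : I ≤ J) (hJ : mId n ^ k ≤ J) {f : R n} (hfk : f ∈ mId n ^ k)
    (hcomp : ∀ e, homogeneousComponent e f ∈ I) (hf : f ∈ I) :
    proj I J (φ ⟨f, hf⟩) = proj I J (φ ⟨homogeneousComponent k f, hcomp k⟩) := by
  have hsum : (⟨f, hf⟩ : I) =
      ∑ e ∈ Finset.range (f.totalDegree + 1), ⟨homogeneousComponent e f, hcomp e⟩ := by
    apply Subtype.ext
    rw [AddSubmonoidClass.coe_finsetSum]
    exact (sum_homogeneousComponent f).symm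
  have hzero : ∀ e, homogeneousComponent e f = 0 →
      proj I J (φ ⟨homogeneousComponent e f, hcomp e⟩) = 0 := by
    intro e he
    have : (⟨homogeneousComponent e f, hcomp e⟩ : I) = 0 := Subtype.ext he
    rw [this, map_zero, map_zero]
  rw [hsum, map_sum, map_sum]
  refine Finset.sum_eq_single k (fun e _ hek => ?_) (fun hk => hzero k ?_)
  · rcases hek.lt_or_gt with hlt | hgt
    · exact hzero e (homogeneousComponent_eq_zero_of_mem_pow_idealOfVars hlt hfk)
    · exact hφ.proj_apply_eq_zero hIJ hJ hgt (hcomp e) (homogeneousComponent_mem e f)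
  · exact homogeneousComponent_eq_zero k f (by simpa using hk)

theorem gradedHom.exists_lift {φ : ↥I →ₗ[R n] R n ⧸ I} (hφ : gradedHom I (-1) φ)
    {V : Type*} [AddCommMonoid V] [Module ℂ V] (j : V →ₗ[ℂ] Rdeg n (k + 1))
    (hj : ∀ v, (j v : R n) ∈ I) :
    ∃ ψ : V →ₗ[ℂ] Rdeg n k, ∀ v, Ideal.Quotient.mk I (ψ v) = φ ⟨j v, hj v⟩ := by
  have := projective_of_divisionRing ℂ V
  refine exists_lift_of_forall_mem_map (Ideal.Quotient.mkₐ ℂ I).toLinearMap (Rdeg n k)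
    (φ.restrictScalars ℂ ∘ₗ
      ((Rdeg n (k + 1)).subtype ∘ₗ j).codRestrict (I.restrictScalars ℂ) hj) fun v => ?_
  rw [← gradedImage_succ_neg_one]
  exact hφ (k + 1) (j v) (hj v) (j v).2

/-- The `ℂ`-linear projection of `R` onto its degree `k` part, with values in the subtype
`R_k`. -/
def homogeneousPart (n k : ℕ) : R n →ₗ[ℂ] Rdeg n k :=
  (homogeneousComponent k).codRestrict (Rdeg n k) (homogeneousComponent_mem k)

theorem homogeneousPart_coe (f : Rdeg n k) : homogeneousPart n k f = f :=
  Subtype.ext (homogeneousComponent_eq_self f.2)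

/-- The homomorphism `m^(k+1) → R/m^(k+1)`, `f ↦ [ψ f_{k+1}]`, of degree `-1` attached to a
`ℂ`-linear map `ψ : R_{k+1} → R_k`, as a linear function of `ψ`. -/
def degreeNegOneHom (n k : ℕ) : (Rdeg n (k + 1) →ₗ[ℂ] Rdeg n k) →ₗ[ℂ]
    (↥(mId n ^ (k + 1)) →ₗ[R n] R n ⧸ mId n ^ (k + 1)) where
  toFun ψ :=
    { toFun := fun f => Ideal.Quotient.mk _ (ψ (homogeneousPart n (k + 1) f))
      map_add' := fun f g => by
        simp only [Submodule.coe_add, map_add]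
      map_smul' := fun r f => by
        have hpart : homogeneousPart n (k + 1) (r * f) =
            constantCoeff r • homogeneousPart n (k + 1) f :=
          Subtype.ext (homogeneousComponent_mul_of_mem_pow_idealOfVars r f.2)
        rw [Submodule.coe_smul, smul_eq_mul, hpart, map_smul, eq_comm]
        exact Ideal.Quotient.eq.2
          (mul_sub_constantCoeff_smul_mem_pow_succ r (Rdeg_mem_mId_pow le_rfl _)) }
  map_add' _ _ := rfl
  map_smul' _ _ := rfl

theorem degreeNegOneHom_apply (ψ : Rdeg n (k + 1) →ₗ[ℂ] Rdeg n k) (f : ↥(mId n ^ (k + 1))) :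
    degreeNegOneHom n k ψ f = Ideal.Quotient.mk _ (ψ (homogeneousPart n (k + 1) f) : R n) :=
  rfl

theorem gradedHom_degreeNegOneHom (ψ : Rdeg n (k + 1) →ₗ[ℂ] Rdeg n k) :
    gradedHom (mId n ^ (k + 1)) (-1) (degreeNegOneHom n k ψ) := by
  intro e f hf hfe
  rw [degreeNegOneHom_apply]
  by_cases he : e = k + 1
  · subst he
    rw [gradedImage_succ_neg_one]
    exact ⟨_, (ψ _).2, rfl⟩
  · have hpart : homogeneousPart n (k + 1) f = 0 :=
      Subtype.ext ((homogeneousComponent_of_mem hfe).trans (if_neg (Ne.symm he)))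
    rw [hpart, map_zero, Submodule.coe_zero, map_zero]
    exact Submodule.zero_mem _

theorem degreeNegOneHom_injective : Function.Injective (degreeNegOneHom n k) := by
  rw [injective_iff_map_eq_zero]
  refine fun ψ hψ => LinearMap.ext fun v => Rdeg_eq_zero_of_mem_mId_pow k.lt_succ_self ?_
  have hv := LinearMap.congr_fun hψ ⟨v, Rdeg_mem_mId_pow le_rfl v⟩
  rw [degreeNegOneHom_apply, homogeneousPart_coe] at hv
  exact Ideal.Quotient.eq_zero_iff_mem.1 hv

theorem gradedHom.exists_degreeNegOneHom_eq
    {φ : ↥(mId n ^ (k + 1)) →ₗ[R n] R n ⧸ mId n ^ (k + 1)}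
    (hφ : gradedHom (mId n ^ (k + 1)) (-1) φ) : ∃ ψ, degreeNegOneHom n k ψ = φ := by
  obtain ⟨ψ, hψ⟩ := hφ.exists_lift LinearMap.id (Rdeg_mem_mId_pow le_rfl)
  refine ⟨ψ, LinearMap.ext fun ⟨f, hf⟩ => ?_⟩
  have hpart := hφ.proj_apply_eq_homogeneousComponent le_rfl le_rfl hf
    (homogeneousComponent_mem_pow_idealOfVars hf) hf
  rw [proj_self, proj_self] at hpart
  exact (hψ (homogeneousPart n (k + 1) f)).trans hpart.symm

/-- The degree `k` part `I ∩ R_k` of an ideal, as a subspace of `R_k`. -/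
abbrev homogeneousPiece (I : Ideal (R n)) (k : ℕ) : Submodule ℂ (Rdeg n k) :=
  (I.restrictScalars ℂ).comap (Rdeg n k).subtype

theorem mem_tripleTgr_degreeNegOneHom_iff (h1 : mId n ^ (k + 1) ≤ I1) (h2 : I2 ≤ mId n ^ (k + 1))
    (hhom2 : ∀ f ∈ I2, ∀ e : ℕ, homogeneousComponent e f ∈ I2)
    {φ1 : ↥I1 →ₗ[R n] R n ⧸ I1} {φ2 : ↥I2 →ₗ[R n] R n ⧸ I2}
    (hφ1 : gradedHom I1 (-1) φ1) (hφ2 : gradedHom I2 (-1) φ2)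
    (ψ : Rdeg n (k + 1) →ₗ[ℂ] Rdeg n k) :
    (φ1, degreeNegOneHom n k ψ, φ2) ∈ tripleTgr I1 (mId n ^ (k + 1)) I2 (-1) ↔
      (∀ v : Rdeg n (k + 1),
        φ1 ⟨v, h1 (Rdeg_mem_mId_pow le_rfl v)⟩ = Ideal.Quotient.mk I1 (ψ v)) ∧
      ∀ w : homogeneousPiece I2 (k + 1),
        Ideal.Quotient.mk (mId n ^ (k + 1)) (ψ w) = proj I2 (mId n ^ (k + 1)) (φ2 ⟨w, w.2⟩) := by
  constructor
  · rintro ⟨⟨h1K, hK2⟩, -⟩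
    refine ⟨fun v => ?_, fun w => ?_⟩
    · have := h1K v (h1 (Rdeg_mem_mId_pow le_rfl v)) (Rdeg_mem_mId_pow le_rfl v)
      rwa [degreeNegOneHom_apply, proj_mk h1, homogeneousPart_coe] at this
    · have := hK2 w (Rdeg_mem_mId_pow le_rfl w.1) w.2
      rwa [degreeNegOneHom_apply, homogeneousPart_coe] at this
  · rintro ⟨hψ1, hψ2⟩
    refine ⟨⟨fun f hf1 hfK => ?_, fun f hfK hf2 => ?_⟩, hφ1, gradedHom_degreeNegOneHom ψ, hφ2⟩
    · have hpart := hφ1.proj_apply_eq_homogeneousComponent le_rfl h1 hfK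
        (fun e => h1 (homogeneousComponent_mem_pow_idealOfVars hfK e)) hf1
      rw [proj_self, proj_self] at hpart
      rw [degreeNegOneHom_apply, proj_mk h1]
      exact hpart.trans (hψ1 (homogeneousPart n (k + 1) f))
    · rw [hφ2.proj_apply_eq_homogeneousComponent h2 le_rfl hfK (hhom2 f hf2) hf2]
      exact hψ2 ⟨homogeneousPart n (k + 1) f, hhom2 f hf2 (k + 1)⟩

theorem forgetful_surjective (h1 : mId n ^ (k + 1) ≤ I1) (h2 : I2 ≤ mId n ^ (k + 1))
    (hhom2 : ∀ f ∈ I2, ∀ e : ℕ, homogeneousComponent e f ∈ I2) :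
    Function.Surjective (forgetful h1 h2 (-1)) := by
  rintro ⟨⟨φ1, φ2⟩, hcompat, hφ1, hφ2⟩
  change gradedHom I1 (-1) φ1 at hφ1
  change gradedHom I2 (-1) φ2 at hφ2
  have hmem1 (v : Rdeg n (k + 1)) : (v : R n) ∈ I1 := h1 (Rdeg_mem_mId_pow le_rfl v)
  have hmem2 (w : homogeneousPiece I2 (k + 1)) : ((w : Rdeg n (k + 1)) : R n) ∈ I2 := w.2
  obtain ⟨c, hc⟩ := hφ1.exists_lift LinearMap.id hmem1
  obtain ⟨a, ha⟩ := hφ2.exists_lift (homogeneousPiece I2 (k + 1)).subtype hmem2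
  have hac (w : homogeneousPiece I2 (k + 1)) : a w - c w ∈ homogeneousPiece I1 k := by
    refine Ideal.Quotient.eq.1 ?_
    calc Ideal.Quotient.mk I1 (a w : R n)
        = proj I2 I1 (φ2 ⟨w, hmem2 w⟩) := by
          rw [← proj_mk (h2.trans h1)]
          exact congrArg (proj I2 I1) (ha w)
      _ = φ1 ⟨w, hmem1 w⟩ := (hcompat w (hmem1 w) (hmem2 w)).symm
      _ = Ideal.Quotient.mk I1 (c w : R n) := (hc w).symm
  obtain ⟨ψ, hψa, hψc⟩ := exists_extend_sub_mem c a (homogeneousPiece I1 k) hac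
  refine ⟨⟨(φ1, degreeNegOneHom n k ψ, φ2),
    (mem_tripleTgr_degreeNegOneHom_iff h1 h2 hhom2 hφ1 hφ2 ψ).2 ⟨fun v => ?_, fun w => ?_⟩⟩, rfl⟩
  · exact (hc v).symm.trans (Ideal.Quotient.eq.2 (hψc v)).symm
  · rw [hψa, ← proj_mk h2]
    exact congrArg (proj I2 (mId n ^ (k + 1))) (ha w)

/-- The map `Hom(R_{k+1}/(I₂ ∩ R_{k+1}), I₁ ∩ R_k) → Hom(R_{k+1}, R_k)` whose image consists of
the maps with values in `I₁` that vanish on `I₂`. -/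
def inflate (I1 I2 : Ideal (R n)) (k : ℕ) :
    ((Rdeg n (k + 1) ⧸ homogeneousPiece I2 (k + 1)) →ₗ[ℂ]
      ↥(I1.restrictScalars ℂ ⊓ Rdeg n k)) →ₗ[ℂ] (Rdeg n (k + 1) →ₗ[ℂ] Rdeg n k) where
  toFun g := Submodule.inclusion inf_le_right ∘ₗ g ∘ₗ (homogeneousPiece I2 (k + 1)).mkQ
  map_add' _ _ := rfl
  map_smul' _ _ := rfl

theorem inflate_injective : Function.Injective (inflate I1 I2 k) := by
  intro g g' h
  refine Submodule.linearMap_qext _ (LinearMap.ext fun v => ?_)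
  exact Submodule.inclusion_injective inf_le_right (LinearMap.congr_fun h v)

theorem exists_inflate_eq_iff {ψ : Rdeg n (k + 1) →ₗ[ℂ] Rdeg n k} :
    (∃ g, inflate I1 I2 k g = ψ) ↔
      (∀ v, (ψ v : R n) ∈ I1) ∧ ∀ w : homogeneousPiece I2 (k + 1), ψ w = 0 := by
  constructor
  · rintro ⟨g, rfl⟩
    refine ⟨fun v => (g (Submodule.Quotient.mk v)).2.1, fun w => ?_⟩
    have hw : (homogeneousPiece I2 (k + 1)).mkQ w = 0 := (Submodule.Quotient.mk_eq_zero _).2 w.2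
    change Submodule.inclusion inf_le_right (g ((homogeneousPiece I2 (k + 1)).mkQ w)) = 0
    rw [hw, map_zero, map_zero]
  · rintro ⟨hI1, hI2⟩
    let ψ' : Rdeg n (k + 1) →ₗ[ℂ] ↥(I1.restrictScalars ℂ ⊓ Rdeg n k) :=
      ((Rdeg n k).subtype ∘ₗ ψ).codRestrict _ fun v => ⟨hI1 v, (ψ v).2⟩
    have hψ' : homogeneousPiece I2 (k + 1) ≤ LinearMap.ker ψ' := fun w hw =>
      Subtype.ext (congrArg (fun u : Rdeg n k => (u : R n)) (hI2 ⟨w, hw⟩))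
    exact ⟨Submodule.liftQ _ ψ' hψ', rfl⟩

theorem mem_tripleTgr_zero_degreeNegOneHom_zero_iff (h1 : mId n ^ (k + 1) ≤ I1)
    (h2 : I2 ≤ mId n ^ (k + 1)) (hhom2 : ∀ f ∈ I2, ∀ e : ℕ, homogeneousComponent e f ∈ I2)
    (ψ : Rdeg n (k + 1) →ₗ[ℂ] Rdeg n k) :
    ((0, degreeNegOneHom n k ψ, 0) : TanCar3 n I1 (mId n ^ (k + 1)) I2) ∈
      tripleTgr I1 (mId n ^ (k + 1)) I2 (-1) ↔ ∃ g, inflate I1 I2 k g = ψ := by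
  have hzero (I : Ideal (R n)) : gradedHom I (-1) 0 := fun _ _ _ _ => Submodule.zero_mem _
  rw [mem_tripleTgr_degreeNegOneHom_iff h1 h2 hhom2 (hzero I1) (hzero I2), exists_inflate_eq_iff]
  refine and_congr (forall_congr' fun v => ?_) (forall_congr' fun w => ?_)
  · rw [LinearMap.zero_apply, eq_comm, Ideal.Quotient.eq_zero_iff_mem]
  · rw [LinearMap.zero_apply, map_zero, Ideal.Quotient.eq_zero_iff_mem]
    refine ⟨Rdeg_eq_zero_of_mem_mId_pow k.lt_succ_self, fun h => ?_⟩
    rw [h]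
    exact Submodule.zero_mem _

/-- The parametrization `g ↦ (0, f ↦ [g f_{k+1}], 0)` of the kernel of the forgetful map. -/
def kerForgetfulParam (h1 : mId n ^ (k + 1) ≤ I1) (h2 : I2 ≤ mId n ^ (k + 1))
    (hhom2 : ∀ f ∈ I2, ∀ e : ℕ, homogeneousComponent e f ∈ I2) :
    ((Rdeg n (k + 1) ⧸ homogeneousPiece I2 (k + 1)) →ₗ[ℂ] ↥(I1.restrictScalars ℂ ⊓ Rdeg n k))
      →ₗ[ℂ] ↥(LinearMap.ker (forgetful h1 h2 (-1))) where
  toFun g := ⟨⟨(0, degreeNegOneHom n k (inflate I1 I2 k g), 0),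
    (mem_tripleTgr_zero_degreeNegOneHom_zero_iff h1 h2 hhom2 _).2 ⟨g, rfl⟩⟩, rfl⟩
  map_add' _ _ := Subtype.ext (Subtype.ext
    (Prod.ext (add_zero _).symm (Prod.ext rfl (add_zero _).symm)))
  map_smul' _ _ := Subtype.ext (Subtype.ext
    (Prod.ext (smul_zero _).symm (Prod.ext rfl (smul_zero _).symm)))

theorem kerForgetfulParam_bijective (h1 : mId n ^ (k + 1) ≤ I1) (h2 : I2 ≤ mId n ^ (k + 1))
    (hhom2 : ∀ f ∈ I2, ∀ e : ℕ, homogeneousComponent e f ∈ I2) :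
    Function.Bijective (kerForgetfulParam h1 h2 hhom2) := by
  constructor
  · intro g g' h
    exact inflate_injective (degreeNegOneHom_injective (congrArg (fun φ => φ.1.1.2.1) h))
  · rintro ⟨⟨⟨φ1, φK, φ2⟩, hφ⟩, hker⟩
    have hker' := congrArg Subtype.val (LinearMap.mem_ker.1 hker)
    obtain rfl : φ1 = 0 := congrArg Prod.fst hker'
    obtain rfl : φ2 = 0 := congrArg Prod.snd hker'
    obtain ⟨ψ, rfl⟩ := gradedHom.exists_degreeNegOneHom_eq hφ.2.2.1
    obtain ⟨g, rfl⟩ := (mem_tripleTgr_zero_degreeNegOneHom_zero_iff h1 h2 hhom2 ψ).1 hφ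
    exact ⟨g, rfl⟩

theorem finrank_ker_forgetful (h1 : mId n ^ (k + 1) ≤ I1) (h2 : I2 ≤ mId n ^ (k + 1))
    (hhom2 : ∀ f ∈ I2, ∀ e : ℕ, homogeneousComponent e f ∈ I2) :
    Module.finrank ℂ ↥(LinearMap.ker (forgetful h1 h2 (-1))) =
      Module.finrank ℂ (Rdeg n (k + 1) ⧸ homogeneousPiece I2 (k + 1)) *
        Module.finrank ℂ ↥(I1.restrictScalars ℂ ⊓ Rdeg n k) := by
  have hfin (d : ℕ) : Module.Finite ℂ (Rdeg n d) :=
    Module.Finite.iff_fg.2 (homogeneousSubmodule_fg (Fin n) ℂ d)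
  have := hfin (k + 1)
  have := hfin k
  have : Module.Finite ℂ ↥(I1.restrictScalars ℂ ⊓ Rdeg n k) :=
    Submodule.finiteDimensional_of_le inf_le_right
  rw [← Module.finrank_linearMap ℂ ℂ]
  exact (LinearEquiv.ofBijective _ (kerForgetfulParam_bijective h1 h2 hhom2)).finrank_eq.symm

theorem forgetful_map_on_degree_minus_one_tangents_general (h1 : mId n ^ (k + 1) ≤ I1)
    (h2 : I2 ≤ mId n ^ (k + 1)) (hhom2 : ∀ f ∈ I2, ∀ e : ℕ, homogeneousComponent e f ∈ I2) :
    ∃ F : ↥(tripleTgr I1 (mId n ^ (k + 1)) I2 (-1)) →ₗ[ℂ] ↥(pairTgr I1 I2 (-1)),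
      (∀ φ : ↥(tripleTgr I1 (mId n ^ (k + 1)) I2 (-1)),
        (F φ : TanCar2 n I1 I2) = ((φ : TanCar3 n I1 (mId n ^ (k + 1)) I2).1,
          (φ : TanCar3 n I1 (mId n ^ (k + 1)) I2).2.2)) ∧
      Function.Surjective F ∧
      (∃ s : ↥(pairTgr I1 I2 (-1)) →ₗ[ℂ] ↥(tripleTgr I1 (mId n ^ (k + 1)) I2 (-1)),
        F ∘ₗ s = LinearMap.id) ∧
      Nonempty (↥(LinearMap.ker F) ≃ₗ[ℂ]
        ((Rdeg n (k + 1) ⧸ homogeneousPiece I2 (k + 1)) →ₗ[ℂ]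
          ↥(I1.restrictScalars ℂ ⊓ Rdeg n k))) ∧
      Module.finrank ℂ ↥(LinearMap.ker F) =
        Module.finrank ℂ (Rdeg n (k + 1) ⧸ homogeneousPiece I2 (k + 1)) *
          Module.finrank ℂ ↥(I1.restrictScalars ℂ ⊓ Rdeg n k) := by
  have hsurj := forgetful_surjective h1 h2 hhom2
  have := projective_of_divisionRing ℂ ↥(pairTgr I1 I2 (-1))
  exact ⟨forgetful h1 h2 (-1), fun _ => rfl, hsurj,
    LinearMap.exists_rightInverse_of_surjective _ (LinearMap.range_eq_top.2 hsurj),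
    ⟨(LinearEquiv.ofBijective _ (kerForgetfulParam_bijective h1 h2 hhom2)).symm⟩,
    finrank_ker_forgetful h1 h2 hhom2⟩

end DegreeNegOne

/-- Let `n ≥ 2`, `k ≥ 1`, and let `I^{(1)} ⊇ m^k ⊇ I^{(2)}` be homogeneous
`m`-primary ideals contained in `m`.  Then the forgetful ℂ-linear map
`T^{=−1}(I^{(1)}, m^k, I^{(2)}) → T^{=−1}(I^{(1)}, I^{(2)})`, `(φ_1, φ_k, φ_2) ↦ (φ_1, φ_2)`,
is surjective and admits a ℂ-linear section, and its kernel is ℂ-linearly isomorphic to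
`Hom_ℂ(R_k/(I^{(2)} ∩ R_k), I^{(1)} ∩ R_{k−1})`; in particular the kernel has dimension
`dim_ℂ (R_k/(I^{(2)} ∩ R_k)) · dim_ℂ (I^{(1)} ∩ R_{k−1})`. -/
theorem forgetful_map_on_degree_minus_one_tangents (n k : ℕ) (hn : 2 ≤ n) (hk : 1 ≤ k)
    (I1 I2 : Ideal (R n))
    (hI1K : mId n ^ k ≤ I1) (hKI2 : I2 ≤ mId n ^ k)
    (hhom1 : ∀ f ∈ I1, ∀ e : ℕ, homogeneousComponent e f ∈ I1)
    (hhom2 : ∀ f ∈ I2, ∀ e : ℕ, homogeneousComponent e f ∈ I2)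
    (hprim1 : ∃ N : ℕ, 1 ≤ N ∧ mId n ^ N ≤ I1)
    (hprim2 : ∃ N : ℕ, 1 ≤ N ∧ mId n ^ N ≤ I2)
    (hm1 : I1 ≤ mId n) (hm2 : I2 ≤ mId n) :
    ∃ F : ↥(tripleTgr I1 (mId n ^ k) I2 (-1)) →ₗ[ℂ] ↥(pairTgr I1 I2 (-1)),
      (∀ φ : ↥(tripleTgr I1 (mId n ^ k) I2 (-1)),
        (F φ : TanCar2 n I1 I2) = ((φ : TanCar3 n I1 (mId n ^ k) I2).1,
          (φ : TanCar3 n I1 (mId n ^ k) I2).2.2)) ∧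
      Function.Surjective F ∧
      (∃ s : ↥(pairTgr I1 I2 (-1)) →ₗ[ℂ] ↥(tripleTgr I1 (mId n ^ k) I2 (-1)),
        F ∘ₗ s = LinearMap.id) ∧
      Nonempty (↥(LinearMap.ker F) ≃ₗ[ℂ]
        ((↥(Rdeg n k) ⧸ Submodule.comap (Rdeg n k).subtype (I2.restrictScalars ℂ)) →ₗ[ℂ]
          ↥(I1.restrictScalars ℂ ⊓ Rdeg n (k - 1)))) ∧
      Module.finrank ℂ ↥(LinearMap.ker F) =
        Module.finrank ℂ
            (↥(Rdeg n k) ⧸ Submodule.comap (Rdeg n k).subtype (I2.restrictScalars ℂ)) *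
          Module.finrank ℂ ↥(I1.restrictScalars ℂ ⊓ Rdeg n (k - 1)) := by
  obtain ⟨k, rfl⟩ := Nat.exists_eq_add_of_le' hk
  exact forgetful_map_on_degree_minus_one_tangents_general hI1K hKI2 hhom2

end
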